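/- Fix c > 0 and an integer N ≥ 2. Let M*(c,N) = E[m*(c,N)], and let γ*(c,N) denote the expectation of the maximum matching size with threshold c/N when the numbers of points on the two sides are independent Poisson random variables K and K' of mean N and, conditionally on (K, K'), the points X₁, …, X_K and Y₁, …, Y_{K'} are independent and uniformly distributed on [0,1]. Then |γ*(c,N) − M*(c,N)| ≤ 4·(1 + √(N·log N)). -/

import Mathlib

open MeasureTheory

/-- The maximum matching size between the points `X 0, …, X (k-1)` and
`Y 0, …, Y (k'-1)` with threshold `r`. -/
noncomputable def mmSize (r : ℝ) {k k' : ℕ} (X : Fin k → ℝ) (Y : Fin k' → ℝ) : ℕ :=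
  sSup {j : ℕ | ∃ σ : Fin j → Fin k, ∃ τ : Fin j → Fin k',
    Function.Injective σ ∧ Function.Injective τ ∧ ∀ i, |X (σ i) - Y (τ i)| < r}

/-- The product of `k` copies of the uniform distribution on `[0,1]`. -/
noncomputable def unifCube (k : ℕ) : Measure (Fin k → ℝ) :=
  Measure.pi fun _ => volume.restrict (Set.Icc 0 1)

/-- `M*(c,N)`: the expectation of the maximum matching size with threshold `c/N`
between `N` i.i.d. uniform points on each side. -/
noncomputable def MStar (c : ℝ) (N : ℕ) : ℝ :=
  ∫ ω, (mmSize (c / N) ω.1 ω.2 : ℝ) ∂((unifCube N).prod (unifCube N))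

/-- `γ*(c,N)`: the expectation of the maximum matching size with threshold `c/N`
when the numbers of points on the two sides are independent Poisson random
variables of mean `N` and, conditionally on them, the points are i.i.d. uniform
on `[0,1]`. -/
noncomputable def gammaStar (c : ℝ) (N : ℕ) : ℝ :=
  ∑' k : ℕ, ∑' k' : ℕ,
    ProbabilityTheory.poissonPMFReal N k * ProbabilityTheory.poissonPMFReal N k' *
      ∫ ω : (Fin k → ℝ) × (Fin k' → ℝ),
        (mmSize (c / N) ω.1 ω.2 : ℝ) ∂((unifCube k).prod (unifCube k'))


lemma mm_mem_bound {r : ℝ} {k k' : ℕ} (X : Fin k → ℝ) (Y : Fin k' → ℝ) :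
    BddAbove {j : ℕ | ∃ σ : Fin j → Fin k, ∃ τ : Fin j → Fin k',
    Function.Injective σ ∧ Function.Injective τ ∧ ∀ i, |X (σ i) - Y (τ i)| < r} := by
  refine ⟨k, ?_⟩
  rintro j ⟨σ, τ, hσ, -, -⟩
  simpa using Fintype.card_le_of_injective σ hσ

lemma le_mmSize_iff {r : ℝ} {k k' : ℕ} (X : Fin k → ℝ) (Y : Fin k' → ℝ) (j : ℕ) :
    j ≤ mmSize r X Y ↔ ∃ σ : Fin j → Fin k, ∃ τ : Fin j → Fin k',
    Function.Injective σ ∧ Function.Injective τ ∧ ∀ i, |X (σ i) - Y (τ i)| < r := by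
  constructor
  · intro h
    have hne : {j : ℕ | ∃ σ : Fin j → Fin k, ∃ τ : Fin j → Fin k',
      Function.Injective σ ∧ Function.Injective τ ∧ ∀ i, |X (σ i) - Y (τ i)| < r}.Nonempty :=
      ⟨0, Fin.elim0, Fin.elim0, fun i => i.elim0, fun i => i.elim0, fun i => i.elim0⟩
    obtain ⟨σ, τ, hσ, hτ, hh⟩ := Nat.sSup_mem hne (mm_mem_bound X Y)
    exact ⟨σ ∘ Fin.castLE h, τ ∘ Fin.castLE h, hσ.comp (Fin.castLE_injective h),
      hτ.comp (Fin.castLE_injective h), fun i => hh _⟩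
  · intro h
    exact le_csSup (mm_mem_bound X Y) h

lemma mmSize_le {r : ℝ} {k k' : ℕ} (X : Fin k → ℝ) (Y : Fin k' → ℝ) : mmSize r X Y ≤ k := by
  obtain ⟨σ, τ, hσ, -, -⟩ := (le_mmSize_iff (r := r) X Y _).1 le_rfl
  simpa using Fintype.card_le_of_injective σ hσ

lemma mmSize_symm {r : ℝ} {k k' : ℕ} (X : Fin k → ℝ) (Y : Fin k' → ℝ) :
    mmSize r X Y = mmSize r Y X := by
  refine eq_of_forall_le_iff fun j => ?_
  rw [le_mmSize_iff, le_mmSize_iff]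
  constructor
  · rintro ⟨σ, τ, hσ, hτ, h⟩
    exact ⟨τ, σ, hτ, hσ, fun i => by rw [abs_sub_comm]; exact h i⟩
  · rintro ⟨σ, τ, hσ, hτ, h⟩
    exact ⟨τ, σ, hτ, hσ, fun i => by rw [abs_sub_comm]; exact h i⟩

lemma mmSize_tail_le {r : ℝ} {k k' : ℕ} (X : Fin (k + 1) → ℝ) (Y : Fin k' → ℝ) :
    mmSize r (fun i => X (Fin.succ i)) Y ≤ mmSize r X Y := by
  rw [le_mmSize_iff]
  obtain ⟨σ, τ, hσ, hτ, h⟩ := (le_mmSize_iff (r := r) (fun i => X (Fin.succ i)) Y _).1 le_rfl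
  exact ⟨fun i => (σ i).succ, τ, (Fin.succ_injective _).comp hσ, hτ, h⟩

lemma mmSize_le_tail {r : ℝ} {k k' : ℕ} (X : Fin (k + 1) → ℝ) (Y : Fin k' → ℝ) :
    mmSize r X Y ≤ mmSize r (fun i => X (Fin.succ i)) Y + 1 := by
  rcases hm : mmSize r X Y with _ | j
  · omega
  obtain ⟨σ, τ, hσ, hτ, h⟩ := (le_mmSize_iff (r := r) X Y (j + 1)).1 hm.ge
  have : ∃ i0, ∀ i, i ≠ i0 → σ i ≠ 0 := by
    by_cases h0 : ∃ i0, σ i0 = 0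
    · obtain ⟨i0, h0⟩ := h0
      exact ⟨i0, fun i hi h1 => hi (hσ (h1.trans h0.symm))⟩
    · push Not at h0
      exact ⟨0, fun i _ => h0 i⟩
  obtain ⟨i0, h0⟩ := this
  have h1 : ∀ i, σ (i0.succAbove i) ≠ 0 := fun i => h0 _ (Fin.succAbove_ne i0 i)
  have : j ≤ mmSize r (fun i => X (Fin.succ i)) Y := by
    rw [le_mmSize_iff]
    refine ⟨fun i => (σ (i0.succAbove i)).pred (h1 i), fun i => τ (i0.succAbove i), ?_, ?_, ?_⟩
    · intro a b hab
      exact Fin.succAbove_right_injective (hσ (Fin.pred_inj.1 hab))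
    · exact hτ.comp Fin.succAbove_right_injective
    · intro i
      simpa using h (i0.succAbove i)
  omega

lemma measurable_mmSize (r : ℝ) (k k' : ℕ) :
    Measurable (fun ω : (Fin k → ℝ) × (Fin k' → ℝ) => mmSize r ω.1 ω.2) := by
  refine measurable_of_Ici fun j => ?_
  have : (fun ω : (Fin k → ℝ) × (Fin k' → ℝ) => mmSize r ω.1 ω.2) ⁻¹' Set.Ici j =
      ⋃ σ : Fin j → Fin k, ⋃ τ : Fin j → Fin k', ⋃ _ : Function.Injective σ,
        ⋃ _ : Function.Injective τ, ⋂ i, {ω | |ω.1 (σ i) - ω.2 (τ i)| < r} := by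
    ext ω
    simp only [Set.mem_preimage, Set.mem_Ici, le_mmSize_iff, Set.mem_iUnion, Set.mem_iInter,
      Set.mem_setOf_eq, exists_prop]
  rw [this]
  refine MeasurableSet.iUnion fun σ => MeasurableSet.iUnion fun τ => MeasurableSet.iUnion fun _ =>
    MeasurableSet.iUnion fun _ => MeasurableSet.iInter fun i => ?_
  exact measurableSet_lt (by fun_prop) measurable_const

instance unif_prob : IsProbabilityMeasure ((volume : Measure ℝ).restrict (Set.Icc 0 1)) :=
  ⟨by simp⟩

instance unifCube_prob (k : ℕ) : IsProbabilityMeasure (unifCube k) := by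
  unfold unifCube; infer_instance

lemma integrable_mmSize (r : ℝ) (k k' : ℕ) :
    Integrable (fun ω : (Fin k → ℝ) × (Fin k' → ℝ) => (mmSize r ω.1 ω.2 : ℝ))
      ((unifCube k).prod (unifCube k')) := by
  refine Integrable.of_bound (C := k) ?_ (Filter.Eventually.of_forall fun ω => ?_)
  · exact (measurable_from_top.comp (measurable_mmSize r k k')).aestronglyMeasurable
  · rw [Real.norm_of_nonneg (Nat.cast_nonneg _)]
    have := mmSize_le (r := r) ω.1 ω.2
    exact_mod_cast this

/-- expected matching size with `k` and `k'` points -/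
noncomputable def fexp (r : ℝ) (k k' : ℕ) : ℝ :=
  ∫ ω : (Fin k → ℝ) × (Fin k' → ℝ), (mmSize r ω.1 ω.2 : ℝ) ∂((unifCube k).prod (unifCube k'))

lemma fexp_symm (r : ℝ) (k k' : ℕ) : fexp r k k' = fexp r k' k := by
  unfold fexp
  rw [← integral_prod_swap]
  simp only [Prod.fst_swap, Prod.snd_swap]
  congr 1
  ext ω
  rw [mmSize_symm]

lemma mp_tail (k : ℕ) : MeasurePreserving (fun (X : Fin (k + 1) → ℝ) (i : Fin k) => X i.succ)
    (unifCube (k + 1)) (unifCube k) := by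
  have h := measurePreserving_piFinSuccAbove
    (fun _ : Fin (k + 1) => (volume : Measure ℝ).restrict (Set.Icc 0 1)) 0
  have h2 := (measurePreserving_snd (μ := (volume : Measure ℝ).restrict (Set.Icc 0 1))
    (ν := unifCube k)).comp h
  exact h2

lemma fexp_step (r : ℝ) (k k' : ℕ) : |fexp r (k + 1) k' - fexp r k k'| ≤ 1 := by
  have hmp := (mp_tail k).prod (MeasurePreserving.id (unifCube k'))
  have e : fexp r k k' = ∫ ω : (Fin (k + 1) → ℝ) × (Fin k' → ℝ),
      (mmSize r (fun i => ω.1 (Fin.succ i)) ω.2 : ℝ) ∂((unifCube (k + 1)).prod (unifCube k')) := by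
    unfold fexp
    rw [← hmp.map_eq, integral_map hmp.measurable.aemeasurable]
    · rfl
    · exact (measurable_from_top.comp (measurable_mmSize r k k')).aestronglyMeasurable
  have i2 : Integrable (fun ω : (Fin (k + 1) → ℝ) × (Fin k' → ℝ) =>
      (mmSize r (fun i => ω.1 (Fin.succ i)) ω.2 : ℝ)) ((unifCube (k + 1)).prod (unifCube k')) :=
    hmp.integrable_comp_of_integrable (integrable_mmSize r k k')
  rw [e]
  unfold fexp
  rw [← integral_sub (integrable_mmSize r (k + 1) k') i2, ← Real.norm_eq_abs]
  refine (norm_integral_le_of_norm_le_const (C := 1) (Filter.Eventually.of_forall fun ω => ?_)).trans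
    (by simp)
  have h1 : (mmSize r (fun i => ω.1 (Fin.succ i)) ω.2 : ℝ) ≤ mmSize r ω.1 ω.2 := by
    exact_mod_cast mmSize_tail_le ω.1 ω.2
  have h2 : (mmSize r ω.1 ω.2 : ℝ) ≤ mmSize r (fun i => ω.1 (Fin.succ i)) ω.2 + 1 := by
    exact_mod_cast mmSize_le_tail ω.1 ω.2
  rw [Real.norm_eq_abs, abs_le]
  constructor <;> linarith

lemma lip_of_step (g : ℕ → ℝ) (h : ∀ k, |g (k + 1) - g k| ≤ 1) (k n : ℕ) :
    |g k - g n| ≤ |(k : ℝ) - n| := by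
  have key : ∀ a d : ℕ, |g (a + d) - g a| ≤ d := by
    intro a d
    induction d with
    | zero => simp
    | succ d ih =>
      have := abs_sub_le (g (a + (d + 1))) (g (a + d)) (g a)
      have := h (a + d)
      push_cast
      rw [← add_assoc] at *
      linarith
  rcases le_total k n with hkn | hkn
  · obtain ⟨d, rfl⟩ := Nat.exists_eq_add_of_le hkn
    rw [abs_sub_comm]
    refine (key k d).trans (le_of_eq ?_)
    push_cast
    rw [abs_sub_comm, add_sub_cancel_left, abs_of_nonneg (Nat.cast_nonneg _)]
  · obtain ⟨d, rfl⟩ := Nat.exists_eq_add_of_le hkn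
    refine (key n d).trans (le_of_eq ?_)
    push_cast
    rw [add_sub_cancel_left, abs_of_nonneg (Nat.cast_nonneg _)]

lemma fexp_lip (r : ℝ) (k k' N : ℕ) :
    |fexp r k k' - fexp r N N| ≤ |(k' : ℝ) - N| + |(k : ℝ) - N| := by
  have h1 := lip_of_step (fun k => fexp r k k') (fun k => fexp_step r k k') k N
  have h2 := lip_of_step (fun k => fexp r k N) (fun k => fexp_step r k N) k' N
  have h3 := abs_sub_le (fexp r k k') (fexp r N k') (fexp r N N)
  have h4 := fexp_symm r k' N
  simp only [h4] at h2
  linarith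

open ProbabilityTheory in
lemma pois_succ (r : NNReal) (k : ℕ) :
    poissonPMFReal r (k + 1) * ((k : ℝ) + 1) = r * poissonPMFReal r k := by
  unfold poissonPMFReal
  rw [Nat.factorial_succ]
  push_cast
  have : (k : ℝ) + 1 ≠ 0 := by positivity
  field_simp
  ring

lemma HasSum.congr_fun' {f g : ℕ → ℝ} {a : ℝ} (h : HasSum f a) (e : ∀ k, g k = f k) :
    HasSum g a := by
  rwa [funext e]

open ProbabilityTheory in
lemma pois_var (r : NNReal) :
    HasSum (fun k : ℕ => poissonPMFReal r k * ((k : ℝ) - r) ^ 2) r := by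
  have h0 : HasSum (poissonPMFReal r) 1 := hasSum_one_poissonMeasure r
  have h1 : HasSum (fun k : ℕ => poissonPMFReal r k * (k : ℝ)) r := by
    rw [← hasSum_nat_add_iff' 1]
    have := h0.mul_left (r : ℝ)
    simpa [pois_succ] using this
  have h2 : HasSum (fun k : ℕ => poissonPMFReal r k * (k : ℝ) ^ 2) (r * (r + 1)) := by
    rw [← hasSum_nat_add_iff' 1]
    have := (h1.add h0).mul_left (r : ℝ)
    have e2 : (r : ℝ) * (r + 1) - ∑ i ∈ Finset.range 1, poissonPMFReal r i * (i : ℝ) ^ 2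
        = r * (r + 1) := by simp
    rw [e2]
    refine this.congr_fun' fun k => ?_
    push_cast
    have := pois_succ r k
    linear_combination ((k : ℝ) + 1) * this
  have := (h2.add (h1.mul_left (-2 * (r : ℝ)))).add (h0.mul_left ((r : ℝ) ^ 2))
  have e2 : (r : ℝ) * (r + 1) + -2 * (r : ℝ) * r + (r : ℝ) ^ 2 * 1 = r := by ring
  rw [e2] at this
  refine this.congr_fun' fun k => ?_
  ring

open ProbabilityTheory in
lemma pois_avg (N : ℕ) (hN : 0 < N) (g : ℕ → ℝ) (a b : ℝ)
    (hg : ∀ k : ℕ, |g k - a| ≤ |(k : ℝ) - N| + b) :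
    |(∑' k, poissonPMFReal N k * g k) - a| ≤ Real.sqrt N + b := by
  have h0 : HasSum (poissonPMFReal N) 1 := hasSum_one_poissonMeasure N
  have hv := pois_var N
  simp only [NNReal.coe_natCast] at hv
  have hs : 0 < Real.sqrt N := Real.sqrt_pos.2 (by exact_mod_cast hN)
  have hs2 : Real.sqrt N * Real.sqrt N = N := Real.mul_self_sqrt (Nat.cast_nonneg _)
  have hb : HasSum (fun k : ℕ => poissonPMFReal N k * ((k : ℝ) - N) ^ 2 * (1 / (2 * Real.sqrt N))
      + poissonPMFReal N k * (Real.sqrt N / 2 + b)) (Real.sqrt N + b) := by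
    have := (hv.mul_right (1 / (2 * Real.sqrt N))).add (h0.mul_right (Real.sqrt N / 2 + b))
    have e2 : (N : ℝ) * (1 / (2 * Real.sqrt N)) + 1 * (Real.sqrt N / 2 + b) = Real.sqrt N + b := by
      have : (N : ℝ) * (1 / (2 * Real.sqrt N)) = Real.sqrt N / 2 := by
        rw [mul_one_div, div_eq_div_iff (by positivity) (by norm_num)]
        linear_combination (-2) * hs2
      rw [this]
      ring
    rw [e2] at this
    exact this
  have hle : ∀ k, ‖poissonPMFReal N k * (g k - a)‖ ≤
      poissonPMFReal N k * ((k : ℝ) - N) ^ 2 * (1 / (2 * Real.sqrt N))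
      + poissonPMFReal N k * (Real.sqrt N / 2 + b) := by
    intro k
    have hp : 0 ≤ poissonPMFReal N k := poissonPMFReal_nonneg
    rw [norm_mul, Real.norm_of_nonneg hp, Real.norm_eq_abs, mul_assoc, ← mul_add]
    refine mul_le_mul_of_nonneg_left ((hg k).trans ?_) hp
    have : |(k : ℝ) - N| ≤ ((k : ℝ) - N) ^ 2 * (1 / (2 * Real.sqrt N)) + Real.sqrt N / 2 := by
      rw [← sq_abs]
      set t := |(k : ℝ) - N|
      have : t ^ 2 * (1 / (2 * Real.sqrt N)) + Real.sqrt N / 2 - t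
        = (t - Real.sqrt N) ^ 2 / (2 * Real.sqrt N) := by
        field_simp
        ring
      have : 0 ≤ (t - Real.sqrt N) ^ 2 / (2 * Real.sqrt N) := by positivity
      linarith
    linarith
  have hsum : Summable fun k => poissonPMFReal N k * (g k - a) :=
    Summable.of_norm_bounded hb.summable hle
  have e : ∑' k, poissonPMFReal N k * g k = ∑' k, poissonPMFReal N k * (g k - a) + a := by
    have := hsum.hasSum.add (h0.mul_right a)
    rw [one_mul] at this
    rw [← this.tsum_eq]
    congr 1
    ext k
    ring
  rw [e, add_sub_cancel_right]
  exact tsum_of_norm_bounded hb hle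

/-- `|γ*(c,N) − M*(c,N)| ≤ 4(1 + √(N log N))`. -/
theorem stmt5 (c : ℝ) (hc : 0 < c) (N : ℕ) (hN : 2 ≤ N) :
    |gammaStar c N - MStar c N| ≤ 4 * (1 + Real.sqrt (N * Real.log N)) := by
  have hN0 : 0 < N := by omega
  have e : gammaStar c N = ∑' k : ℕ, ProbabilityTheory.poissonPMFReal N k *
      ∑' k' : ℕ, ProbabilityTheory.poissonPMFReal N k' * fexp (c / N) k k' := by
    unfold gammaStar fexp
    simp_rw [mul_assoc, tsum_mul_left]
  have em : MStar c N = fexp (c / N) N N := rfl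
  rw [e, em]
  have h := pois_avg N hN0 _ (fexp (c / N) N N) (Real.sqrt N) (fun k => by
    have := pois_avg N hN0 (fun k' => fexp (c / N) k k') (fexp (c / N) N N) (|(k : ℝ) - N|)
      (fun k' => fexp_lip _ _ _ _)
    rw [add_comm]
    exact this)
  refine h.trans ?_
  have hlog : (1 / 4 : ℝ) ≤ Real.log N := by
    have h2 := Real.log_two_gt_d9
    have : Real.log 2 ≤ Real.log N := Real.log_le_log (by norm_num) (by exact_mod_cast hN)
    linarith
  have : Real.sqrt N / 2 ≤ Real.sqrt (N * Real.log N) := by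
    apply Real.le_sqrt_of_sq_le
    rw [div_pow, Real.sq_sqrt (Nat.cast_nonneg _)]
    have : (0 : ℝ) ≤ N := Nat.cast_nonneg _
    nlinarith
  linarith
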